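/- arXiv:1811.05156 — 4 statements merged into one kernel-verified Lean document; each statement's English description precedes it below -/
import Mathlib

section
/- Let (V̄,Ē) be a finite undirected graph with distinguished vertex 0 ∈ V̄ and n = |V̄| ≥ 2. Then (V̄,Ē) is connected if and only if there exist f : 𝒜 → {0,1} and u : V̄ → ℝ satisfying the MTZ constraints (6a)–(6e). -/
/-!
If `G` is connected, let every `i ≠ v0` select one arc, to a neighbour (its parent) that is one
step closer to `v0`, and put `u i = n - 1 - dist i v0`. Then `u` grows by exactly `1` along every
selected arc and changes by at most `1` along any edge, which gives the MTZ inequality. The one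
delicate case is an edge with neither arc selected, where the inequality reads `u i - u j ≤ n - 2`;
when `j` is the farther endpoint from `v0`, then `j`, its parent and `i` are three
distinct vertices, so `n ≥ 3` and the gap of `1` is allowed.

Conversely, every `i ≠ v0` has an outgoing arc with `f i j = 1`, and for `n ≥ 3` the MTZ inequality
forces `u i + 1 ≤ u j`. A vertex with maximal `u` among those not joined to `v0` would have such an
arc to another vertex not joined to `v0`, of larger `u`. The two vertices and `v0` are
distinct, so `n ≥ 3` holds automatically.
-/

open Finset

theorem three_le_card {ι : Type*} [Fintype ι] {a b c : ι}
    (hac : a ≠ c) (hbc : b ≠ c) (hab : b ≠ a) : 3 ≤ Fintype.card ι := by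
  classical
  rw [← card_eq_three.mpr ⟨a, b, c, hab.symm, hac, hbc, rfl⟩]
  exact card_le_univ _

theorem exists_adj_dist_succ {ι : Type*} {G : SimpleGraph ι} (hc : G.Connected) {i v : ι}
    (hi : i ≠ v) : ∃ j, G.Adj i j ∧ G.dist i v = G.dist j v + 1 := by
  obtain ⟨w, hw⟩ := hc.exists_walk_length_eq_dist i v
  cases w with
  | nil => exact absurd rfl hi
  | @cons _ j _ hij w' =>
    refine ⟨j, hij, ?_⟩
    have h1 : G.dist j v ≤ w'.length := SimpleGraph.dist_le w'
    have h2 : G.dist i v ≤ G.dist i j + G.dist j v := hc.dist_triangle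
    rw [SimpleGraph.dist_eq_one_iff_adj.mpr hij] at h2
    rw [SimpleGraph.Walk.length_cons] at hw
    omega

/-- a finite undirected graph `(V̄, Ē)` with distinguished vertex `0`
(here `v0`) and `n = |V̄| ≥ 2` is connected iff there exist `f : 𝒜 → {0,1}` and
`u : V̄ → ℝ` satisfying the MTZ constraints (6a)–(6e).  Here `f` is encoded as a
real-valued function on ordered pairs, required to take values in `{0,1}` on the
bidirected arc set `𝒜 = {(i,j) : {i,j} ∈ Ē}`; all constraints only involve arcs. -/
theorem connected_iff_MTZ {ι : Type*} [Fintype ι] [DecidableEq ι]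
    (G : SimpleGraph ι) [DecidableRel G.Adj] (v0 : ι)
    (hn : 2 ≤ Fintype.card ι) :
    G.Connected ↔
      ∃ (f : ι → ι → ℝ) (u : ι → ℝ),
        (∀ i j, G.Adj i j → (f i j = 0 ∨ f i j = 1)) ∧
        -- (6a)
        (∀ i j, G.Adj i j →
          ((Fintype.card ι : ℝ) - 1) * f i j + ((Fintype.card ι : ℝ) - 3) * f j i +
            u i - u j ≤ (Fintype.card ι : ℝ) - 2) ∧
        -- (6b)
        (∀ i, 0 ≤ u i ∧ u i ≤ (Fintype.card ι : ℝ) - 1) ∧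
        -- (6c)
        (∀ i, i ≠ v0 → ∑ j ∈ univ.filter (fun j => G.Adj i j), f i j = 1) ∧
        -- (6d)
        (1 ≤ ∑ j ∈ univ.filter (fun j => G.Adj j v0), f j v0) ∧
        -- (6e)
        (∑ i, ∑ j ∈ univ.filter (fun j => G.Adj i j), f i j =
          (Fintype.card ι : ℝ) - 1) := by
  constructor
  · intro hc
    have hn' : (2 : ℝ) ≤ Fintype.card ι := by exact_mod_cast hn
    have : Nontrivial ι := Fintype.one_lt_card_iff_nontrivial.mp hn
    have hex : ∀ i, ∃ j, i ≠ v0 → G.Adj i j ∧ G.dist i v0 = G.dist j v0 + 1 := by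
      intro i
      by_cases hi : i = v0
      · exact ⟨v0, fun h => absurd hi h⟩
      · obtain ⟨j, hj⟩ := exists_adj_dist_succ hc hi
        exact ⟨j, fun _ => hj⟩
    choose p hp using hex
    refine ⟨fun i j => if i ≠ v0 ∧ j = p i then 1 else 0,
      fun i => (Fintype.card ι : ℝ) - 1 - G.dist i v0, ?_, ?_, ?_, ?_, ?_, ?_⟩
    · intro i j _
      dsimp only
      split_ifs <;> simp
    · intro i j hij
      dsimp only
      by_cases h1 : i ≠ v0 ∧ j = p i
      · have hd := (hp i h1.1).2
        rw [← h1.2] at hd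
        have h2 : ¬ (j ≠ v0 ∧ i = p j) := by
          rintro ⟨hj, h⟩
          have := (hp j hj).2
          rw [← h] at this
          omega
        have hd' : (G.dist i v0 : ℝ) = G.dist j v0 + 1 := by exact_mod_cast hd
        rw [if_pos h1, if_neg h2]
        linarith
      · by_cases h2 : j ≠ v0 ∧ i = p j
        · have hd := (hp j h2.1).2
          rw [← h2.2] at hd
          have hd' : (G.dist j v0 : ℝ) = G.dist i v0 + 1 := by exact_mod_cast hd
          rw [if_neg h1, if_pos h2]
          linarith
        · rw [if_neg h1, if_neg h2]
          by_cases hle : G.dist j v0 ≤ G.dist i v0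
          · have : (G.dist j v0 : ℝ) ≤ G.dist i v0 := by exact_mod_cast hle
            linarith
          · -- Here `j`, its parent and `i` are distinct, so `n ≥ 3` leaves room for a gap of `1`.
            have hj : j ≠ v0 := by
              rintro rfl
              simp at hle
            have hpi : i ≠ p j := fun h => h2 ⟨hj, h⟩
            have h3 : (3 : ℝ) ≤ Fintype.card ι := by
              exact_mod_cast three_le_card hpi (hp j hj).1.ne hij.ne'
            have hd : G.dist j v0 ≤ G.dist j i + G.dist i v0 := hc.dist_triangle
            rw [SimpleGraph.dist_eq_one_iff_adj.mpr hij.symm] at hd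
            have hd' : (G.dist j v0 : ℝ) ≤ 1 + G.dist i v0 := by exact_mod_cast hd
            linarith
    · intro i
      obtain ⟨w, hw, hlen⟩ := hc.exists_path_of_dist i v0
      have hlt := hw.length_lt
      rw [hlen] at hlt
      have hlt' : (G.dist i v0 : ℝ) + 1 ≤ Fintype.card ι := by exact_mod_cast hlt
      have h0 : (0 : ℝ) ≤ G.dist i v0 := Nat.cast_nonneg _
      constructor <;> dsimp only <;> linarith
    · intro i hi
      simp [hi, (hp i hi).1]
    · obtain ⟨j, hj⟩ := hc.preconnected.exists_adj_of_nontrivial v0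
      have hjp : p j = v0 := by
        have hd := (hp j hj.ne').2
        rw [SimpleGraph.dist_eq_one_iff_adj.mpr hj.symm] at hd
        exact hc.dist_eq_zero_iff.mp (by omega)
      have hmem : j ∈ univ.filter (fun j => G.Adj j v0) := by simpa using hj.symm
      refine le_trans ?_ (single_le_sum (fun i _ => ?_) hmem)
      · simp [hjp, hj.ne']
      · dsimp only; split_ifs <;> simp
    · have hrow : ∀ i, ∑ j ∈ univ.filter (fun j => G.Adj i j),
          (if i ≠ v0 ∧ j = p i then (1 : ℝ) else 0) = 1 - if i = v0 then 1 else 0 := by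
        intro i
        by_cases hi : i = v0
        · simp [hi]
        · simp [hi, (hp i hi).1]
      simp only [hrow]
      simp
  · rintro ⟨f, u, hf, ha, -, hout, -, -⟩
    have hreach : ∀ i, G.Reachable i v0 := by
      by_contra! hcon
      obtain ⟨i₀, hi₀⟩ := hcon
      classical
      obtain ⟨i, hi, hmax⟩ := exists_max_image (univ.filter fun i => ¬ G.Reachable i v0) u
        ⟨i₀, by simpa using hi₀⟩
      simp only [mem_filter, mem_univ, true_and] at hi hmax
      have hiv : i ≠ v0 := by
        rintro rfl
        exact hi .rfl
      obtain ⟨j, hj, hne⟩ := exists_ne_zero_of_sum_ne_zero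
        (by rw [hout i hiv]; exact one_ne_zero)
      have hij : G.Adj i j := by simpa using hj
      have hfij := (hf i j hij).resolve_left hne
      have hjr : ¬ G.Reachable j v0 := fun h => hi (hij.reachable.trans h)
      have hjv : j ≠ v0 := by
        rintro rfl
        exact hjr .rfl
      have h3 : (3 : ℝ) ≤ Fintype.card ι := by
        exact_mod_cast three_le_card hiv hjv hij.ne'
      have hu := ha i j hij
      have hm := hmax j hjr
      rw [hfij] at hu
      rcases hf j i hij.symm with h | h <;> rw [h] at hu <;> linarith
    exact
      { preconnected := fun a b => (hreach a).trans (hreach b).symm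
        nonempty := ⟨v0⟩ }
end

section
/- Let (V̄,Ē) be a finite undirected graph with distinguished vertex 0 ∈ V̄ and n = |V̄| ≥ 2. If f : 𝒜 → {0,1} and u : V̄ → ℝ satisfy the MTZ constraints (6a)–(6d), then for every vertex v ∈ V̄ \ {0} there is a directed path from v to 0 in the directed graph with arc set {(i,j) ∈ 𝒜 : f_{ij} = 1}. -/
open Finset

/-!
A non-root vertex has an outgoing selected arc. If such an arc `(i, j)` does not end at the
root, then `i`, `j`, `v0` are distinct, so `n ≥ 3`, and the MTZ inequality gives `u i < u j`:
the bound on `u i - u j` is `-1` when `f j i = 0` and `2 - n` when `f j i = 1`. Since `V̄` is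
finite, `u` cannot increase forever, so following selected arcs reaches the root; formally this
is well-founded induction along decreasing order of `u`.
-/

/-- let `(V̄, Ē)` be a finite undirected graph with distinguished vertex
`v0` and `n = |V̄| ≥ 2`.  If `f : 𝒜 → {0,1}` and `u : V̄ → ℝ` satisfy the MTZ
constraints (6a)–(6d), then from every vertex `v ≠ v0` there is a directed path to `v0`
in the directed graph with arc set `{(i,j) ∈ 𝒜 : f i j = 1}`. -/
theorem MTZ_implies_path_to_root {ι : Type*} [Fintype ι] [DecidableEq ι]
    (G : SimpleGraph ι) [DecidableRel G.Adj] (v0 : ι)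
    (hn : 2 ≤ Fintype.card ι) (f : ι → ι → ℝ) (u : ι → ℝ)
    (hf01 : ∀ i j, G.Adj i j → (f i j = 0 ∨ f i j = 1))
    -- (6a)
    (h6a : ∀ i j, G.Adj i j →
      ((Fintype.card ι : ℝ) - 1) * f i j + ((Fintype.card ι : ℝ) - 3) * f j i +
        u i - u j ≤ (Fintype.card ι : ℝ) - 2)
    -- (6b)
    (h6b : ∀ i, 0 ≤ u i ∧ u i ≤ (Fintype.card ι : ℝ) - 1)
    -- (6c)
    (h6c : ∀ i, i ≠ v0 → ∑ j ∈ univ.filter (fun j => G.Adj i j), f i j = 1)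
    -- (6d)
    (h6d : 1 ≤ ∑ j ∈ univ.filter (fun j => G.Adj j v0), f j v0) :
    ∀ v : ι, v ≠ v0 →
      Relation.ReflTransGen (fun a b => G.Adj a b ∧ f a b = 1) v v0 := by
  have harc : ∀ i, i ≠ v0 → ∃ j, G.Adj i j ∧ f i j = 1 := by
    intro i hi
    by_contra! hno
    have hz : ∑ j ∈ univ.filter (fun j => G.Adj i j), f i j = 0 := by
      refine Finset.sum_eq_zero fun j hj => ?_
      have hadj : G.Adj i j := (Finset.mem_filter.mp hj).2
      exact (hf01 i j hadj).resolve_right (hno j hadj)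
    have h1 := h6c i hi
    linarith
  have hlt : ∀ i j, i ≠ v0 → j ≠ v0 → G.Adj i j → f i j = 1 → u i < u j := by
    intro i j hi hj hadj hf
    have hcard : 3 ≤ Fintype.card ι := by
      have h3 : ({i, j, v0} : Finset ι).card = 3 :=
        Finset.card_eq_three.mpr ⟨i, j, v0, hadj.ne, hi, hj, rfl⟩
      exact h3 ▸ Finset.card_le_univ _
    have hcard' : (3 : ℝ) ≤ Fintype.card ι := by exact_mod_cast hcard
    have h := h6a i j hadj
    rw [hf] at h
    rcases hf01 j i hadj.symm with h0 | h0 <;> rw [h0] at h <;> linarith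
  have hwf : WellFounded (fun a b : ι => u b < u a) :=
    haveI : IsTrans ι (fun a b => u b < u a) := ⟨fun _ _ _ hab hbc => hbc.trans hab⟩
    haveI : Std.Irrefl (fun a b : ι => u b < u a) := ⟨fun a => lt_irrefl (u a)⟩
    Finite.wellFounded_of_trans_of_irrefl _
  intro v
  induction v using hwf.induction with
  | _ v ih =>
    intro hv
    obtain ⟨j, hadj, hf⟩ := harc v hv
    by_cases hj : j = v0
    · exact Relation.ReflTransGen.single (hj ▸ ⟨hadj, hf⟩)
    · exact Relation.ReflTransGen.head ⟨hadj, hf⟩ (ih j (hlt v j hv hj hadj hf) hj)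
end

section
/- Let (V̄,Ē) be a finite undirected graph with distinguished vertex 0 ∈ V̄ and n = |V̄| ≥ 2. If f : 𝒜 → {0,1} and u : V̄ → ℝ satisfy constraints (6a) and (6b), then the directed graph with arc set {(i,j) ∈ 𝒜 : f_{ij} = 1} contains no directed cycle through fewer than n distinct vertices (i.e., no directed cycle with fewer than |V̄| arcs). -/
/-! If `f i j = 1`, then (6a) reads `u i + 1 + (n - 3) * f j i ≤ u j`, so for `n ≥ 3` the potential
`u` grows by at least `1` along every selected arc (`f j i ≥ 0`). Going once around a cycle of
length `k` gives `u (c 0) + k ≤ u (c k) = u (c 0)`, which is absurd. For `n = 2` the coefficient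
`n - 3` is negative, but then `k = 1` and the cycle would be a loop of a simple graph. -/

/-- let `(V̄, Ē)` be a finite undirected graph with distinguished vertex
`v0` and `n = |V̄| ≥ 2`.  If `f : 𝒜 → {0,1}` and `u : V̄ → ℝ` satisfy constraints (6a)
and (6b), then the directed graph with arc set `{(i,j) ∈ 𝒜 : f i j = 1}` contains no
directed cycle through fewer than `n` distinct vertices, i.e. no directed cycle with
fewer than `n` arcs.  A directed cycle with `k` arcs is encoded as `c : ℕ → ι` with
`c 0, …, c (k-1)` distinct, `c k = c 0`, and an arc from `c m` to `c (m+1)` for every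
`m < k`. -/
theorem MTZ_subtour_elimination {ι : Type*} [Fintype ι] [DecidableEq ι]
    (G : SimpleGraph ι) (v0 : ι)
    (hn : 2 ≤ Fintype.card ι) (f : ι → ι → ℝ) (u : ι → ℝ)
    (hf01 : ∀ i j, G.Adj i j → (f i j = 0 ∨ f i j = 1))
    -- (6a)
    (h6a : ∀ i j, G.Adj i j →
      ((Fintype.card ι : ℝ) - 1) * f i j + ((Fintype.card ι : ℝ) - 3) * f j i +
        u i - u j ≤ (Fintype.card ι : ℝ) - 2)
    -- (6b)
    (h6b : ∀ i, 0 ≤ u i ∧ u i ≤ (Fintype.card ι : ℝ) - 1) :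
    ∀ (k : ℕ), 0 < k → k < Fintype.card ι → ∀ c : ℕ → ι,
      Set.InjOn c (Set.Iio k) → c k = c 0 →
      ¬ (∀ m < k, G.Adj (c m) (c (m + 1)) ∧ f (c m) (c (m + 1)) = 1) := by
  intro k hk hkn c _ hc h
  have hk2 : k ≠ 1 := by
    rintro rfl
    have h0 := (h 0 one_pos).1
    rw [zero_add, hc] at h0
    exact G.loopless.irrefl _ h0
  have hn3 : (3 : ℝ) ≤ Fintype.card ι := by
    exact_mod_cast (by omega : 3 ≤ Fintype.card ι)
  have hstep : ∀ m < k, u (c m) + 1 ≤ u (c (m + 1)) := by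
    intro m hm
    obtain ⟨hadj, hf⟩ := h m hm
    have h6 := h6a _ _ hadj
    rw [hf] at h6
    rcases hf01 _ _ hadj.symm with h0 | h0 <;> rw [h0] at h6 <;> linarith
  have hsum : ∀ m ≤ k, u (c 0) + m ≤ u (c m) := by
    intro m
    induction m with
    | zero => simp
    | succ m ih =>
      intro hm
      have h1 := ih (by omega)
      have h2 := hstep m (by omega)
      push_cast
      linarith
  have hlast := hsum k le_rfl
  rw [hc] at hlast
  have hkpos : (0 : ℝ) < k := by exact_mod_cast hk
  linarith
end

section
/- Let G = (V,E) be a finite simple graph with designated measurement sets 𝓜^I ⊆ V and 𝓜^P ⊆ V. Suppose z : V → {0,1}, x : V → [0,1] and w : V × V → [0,1] satisfy: (14a) z_i + ∑_{k : {i,k} ∈ E} z_k + ∑_{j ∈ V} w_{ij} ≥ 1 for every i ∈ V; (14b) ∑_{i ∈ V} w_{ij} ≤ x_j for every j ∈ V, and w_{ij} = 0 whenever i ≠ j and {i,j} ∉ E; and x_i = 0 for i ∉ 𝓜^I. Then there exist binary-valued x' : V → {0,1} and w' : V × V → {0,1} satisfying the same constraints (with the same z) such that x'_i ≤ ⌈x_i⌉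 componentwise fails in general but ∑_{i ∈ 𝓜^I} c^I_i x'_i ≤ ∑_{i ∈ 𝓜^I} c^I_i x_i for every choice of nonnegative costs c^I; in particular, the optimal value of the integer program (15) equals the optimal value of its mixed relaxation (16) in which x and w are relaxed to take values in [0,1]. -/
/-! Since `z` is binary, every vertex is either dominated by `z` (its constraint holds whatever `w` is)
or receives nothing from `z`. Let `S` be the set of vertices of the second kind. For `i ∈ S` the row
sum of `w` is at least `1`, so dividing the row by it gives rows of sum exactly `1` and can only
decrease the column sums, which stay below `x ≤ 1`. Spreading the slack of each column evenly over
the rows outside `S` yields a doubly stochastic matrix. By Birkhoff's theorem it is a convex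
combination of permutation matrices, and some permutation matrix of positive weight costs no more
than the average. Positive weight places that permutation inside the support of the matrix, so its
rows in `S` form an admissible binary `w'`, whose column sums are `x'`.

Equality of the optimal values follows: binary feasible points are feasible for the relaxation, and
each feasible point of the relaxation is rounded, with `z` fixed, to a binary one that is no more
expensive.
-/

open Finset

/-- Feasibility for the domination integer program (15): `x, z, w` are binary and satisfy
(14a), (14b), (14c), `x = 0` off `𝓜^I` and `z = 0` off `𝓜^P`. -/
def Feas15 {V : Type*} [Fintype V] (G : SimpleGraph V) [DecidableRel G.Adj]
    (MI MP : Finset V) (x z : V → ℝ) (w : V → V → ℝ) : Prop :=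
  (∀ i, x i = 0 ∨ x i = 1) ∧ (∀ k, z k = 0 ∨ z k = 1) ∧ (∀ i j, w i j = 0 ∨ w i j = 1) ∧
  (∀ i, 1 ≤ z i + ∑ k ∈ univ.filter (fun k => G.Adj i k), z k + ∑ j, w i j) ∧
  (∀ j, ∑ i, w i j ≤ x j) ∧
  (∀ i j, i ≠ j → ¬ G.Adj i j → w i j = 0) ∧
  (1 ≤ ∑ k ∈ MP, z k) ∧
  (∀ i, i ∉ MI → x i = 0) ∧ (∀ k, k ∉ MP → z k = 0)

/-- Feasibility for the mixed relaxation (16): as in (15) but `x` and `w` may take any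
values in `[0,1]`, while `z` remains binary. -/
def Feas16 {V : Type*} [Fintype V] (G : SimpleGraph V) [DecidableRel G.Adj]
    (MI MP : Finset V) (x z : V → ℝ) (w : V → V → ℝ) : Prop :=
  (∀ i, 0 ≤ x i ∧ x i ≤ 1) ∧ (∀ k, z k = 0 ∨ z k = 1) ∧
  (∀ i j, 0 ≤ w i j ∧ w i j ≤ 1) ∧
  (∀ i, 1 ≤ z i + ∑ k ∈ univ.filter (fun k => G.Adj i k), z k + ∑ j, w i j) ∧
  (∀ j, ∑ i, w i j ≤ x j) ∧
  (∀ i j, i ≠ j → ¬ G.Adj i j → w i j = 0) ∧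
  (1 ≤ ∑ k ∈ MP, z k) ∧
  (∀ i, i ∉ MI → x i = 0) ∧ (∀ k, k ∉ MP → z k = 0)

/-- For a linear cost `f`, some permutation matrix supported inside the doubly stochastic matrix `M`
costs at most `f M`: any Birkhoff decomposition of `M` has such a term of positive weight. -/
lemma exists_perm_le_of_mem_doublyStochastic {V : Type*} [Fintype V] [DecidableEq V]
    {M : Matrix V V ℝ} (hM : M ∈ doublyStochastic ℝ V) (f : Matrix V V ℝ →ₗ[ℝ] ℝ) :
    ∃ σ : Equiv.Perm V, f (σ.permMatrix ℝ) ≤ f M ∧ ∀ i, M i (σ i) ≠ 0 := by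
  obtain ⟨a, ha0, ha1, haM⟩ := exists_eq_sum_perm_of_mem_doublyStochastic hM
  obtain ⟨σ, hσ, hle⟩ : ∃ σ, 0 < a σ ∧ f (σ.permMatrix ℝ) ≤ f M := by
    by_contra! hcon
    have hfM : ∑ σ, a σ * f (σ.permMatrix ℝ) = f M := by
      rw [← haM, map_sum]
      simp
    have hcM : ∑ σ, a σ * f M = f M := by rw [← Finset.sum_mul, ha1, one_mul]
    obtain ⟨τ, -, hτ⟩ : ∃ τ ∈ (univ : Finset (Equiv.Perm V)), 0 < a τ := by
      apply Finset.exists_lt_of_sum_lt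
      simp [ha1]
    have hlt : ∑ σ, a σ * f M < ∑ σ, a σ * f (σ.permMatrix ℝ) := by
      refine Finset.sum_lt_sum (fun σ _ => ?_) ⟨τ, mem_univ _, ?_⟩
      · rcases (ha0 σ).eq_or_lt with h | h
        · simp [← h]
        · exact mul_le_mul_of_nonneg_left (hcon σ h).le h.le
      · exact mul_lt_mul_of_pos_left (hcon τ hτ) hτ
    linarith
  refine ⟨σ, hle, fun i => ne_of_gt ?_⟩
  have hMi : M i (σ i) = ∑ τ, a τ * (τ.permMatrix ℝ) i (σ i) := by
    rw [← haM]
    simp [Matrix.sum_apply]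
  have hnn : ∀ τ ∈ (univ : Finset (Equiv.Perm V)), 0 ≤ a τ * (τ.permMatrix ℝ) i (σ i) := by
    intro τ _
    refine mul_nonneg (ha0 τ) ?_
    rw [Equiv.Perm.permMatrix, PEquiv.toMatrix_apply]
    split_ifs <;> norm_num
  have hone : a σ * (σ.permMatrix ℝ) i (σ i) = a σ := by
    simp [Equiv.Perm.permMatrix, PEquiv.toMatrix_apply]
  have := Finset.single_le_sum hnn (mem_univ σ)
  linarith

/-- A nonnegative matrix whose rows indexed by `S` sum to `1` and whose column sums over `S` are at
most `1` agrees on the rows in `S` with a doubly stochastic matrix. -/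
lemma exists_doublyStochastic_extension {V : Type*} [Fintype V] [DecidableEq V] (S : Finset V)
    (u : V → V → ℝ) (hu : ∀ i j, 0 ≤ u i j) (hrow : ∀ i ∈ S, ∑ j, u i j = 1)
    (hcol : ∀ j, ∑ i ∈ S, u i j ≤ 1) :
    ∃ M ∈ doublyStochastic ℝ V, ∀ i ∈ S, ∀ j, M i j = u i j := by
  have hslack : ∑ j, (1 - ∑ i ∈ S, u i j) = (#Sᶜ : ℝ) := by
    rw [Finset.sum_sub_distrib, Finset.sum_comm, Finset.sum_congr rfl hrow,
      Finset.card_compl, Nat.cast_sub (Finset.card_le_univ S)]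
    simp
  refine ⟨Matrix.of fun i j =>
    if i ∈ S then u i j else (1 - ∑ i ∈ S, u i j) / (#Sᶜ : ℝ), ?_, ?_⟩
  · rw [mem_doublyStochastic_iff_sum]
    simp only [Matrix.of_apply]
    refine ⟨fun i j => ?_, fun i => ?_, fun j => ?_⟩
    · split_ifs
      · exact hu i j
      · exact div_nonneg (sub_nonneg.2 (hcol j)) (Nat.cast_nonneg _)
    · by_cases hi : i ∈ S
      · simpa [hi] using hrow i hi
      · have hne : (#Sᶜ : ℝ) ≠ 0 := by
          have : i ∈ Sᶜ := by simpa using hi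
          exact_mod_cast (Finset.card_pos.2 ⟨i, this⟩).ne'
        simp only [hi, if_false]
        rw [← Finset.sum_div, hslack, div_self hne]
    · rw [← Finset.sum_add_sum_compl S,
        Finset.sum_congr rfl (g := fun i => u i j) (fun i hi => by simp [hi]),
        Finset.sum_congr (s₁ := Sᶜ) rfl
          (g := fun _ => (1 - ∑ i ∈ S, u i j) / (#Sᶜ : ℝ))
          (fun i hi => by simp [Finset.mem_compl.1 hi]),
        Finset.sum_const, nsmul_eq_mul]
      by_cases h0 : (#Sᶜ : ℝ) = 0
      · -- With no row outside `S` the slacks are nonnegative with sum `0`, so each vanishes.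
        rw [h0] at hslack
        have := (Finset.sum_eq_zero_iff_of_nonneg
          (fun j _ => sub_nonneg.2 (hcol j))).1 hslack j (mem_univ j)
        rw [h0]
        linarith
      · rw [mul_div_cancel₀ _ h0]
        ring
  · intro i hi j
    simp [hi]

/-- Rounding on a fixed set `S` of rows: a fractional assignment covering every row of `S` can be
replaced by an injective choice of columns, inside the support of `w`, that is no more expensive. -/
lemma exists_perm_rounding {V : Type*} [Fintype V] [DecidableEq V] (S T : Finset V)
    (x : V → ℝ) (w : V → V → ℝ) (hx : ∀ j, x j ≤ 1) (hw : ∀ i j, 0 ≤ w i j)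
    (hrow : ∀ i ∈ S, 1 ≤ ∑ j, w i j) (hcol : ∀ j, ∑ i, w i j ≤ x j)
    (c : V → ℝ) (hc : ∀ j, 0 ≤ c j) :
    ∃ σ : Equiv.Perm V, (∀ i ∈ S, w i (σ i) ≠ 0) ∧
      ∑ j ∈ T, c j * (∑ i, if i ∈ S ∧ σ i = j then 1 else 0) ≤ ∑ j ∈ T, c j * x j := by
  set u : V → V → ℝ := fun i j => w i j / ∑ k, w i k with hu
  have hu0 : ∀ i j, 0 ≤ u i j := fun i j =>
    div_nonneg (hw i j) (Finset.sum_nonneg fun k _ => hw i k)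
  have hucol : ∀ j, ∑ i ∈ S, u i j ≤ x j := fun j =>
    calc ∑ i ∈ S, u i j ≤ ∑ i ∈ S, w i j :=
          Finset.sum_le_sum fun i hi => div_le_self (hw i j) (hrow i hi)
      _ ≤ ∑ i, w i j := Finset.sum_le_univ_sum_of_nonneg fun i => hw i j
      _ ≤ x j := hcol j
  obtain ⟨M, hM, hMu⟩ := exists_doublyStochastic_extension S u hu0
    (fun i hi => by
      simp only [hu]
      rw [← Finset.sum_div, div_self (by linarith [hrow i hi])])
    (fun j => (hucol j).trans (hx j))
  let f : Matrix V V ℝ →ₗ[ℝ] ℝ :=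
    { toFun := fun A => ∑ j ∈ T, c j * ∑ i ∈ S, A i j
      map_add' := fun A B => by simp [Finset.sum_add_distrib, mul_add]
      map_smul' := fun r A => by
        simp only [Matrix.smul_apply, smul_eq_mul, RingHom.id_apply, ← Finset.mul_sum]
        rw [Finset.mul_sum]
        exact Finset.sum_congr rfl fun j _ => by ring }
  obtain ⟨σ, hσ, hsupp⟩ := exists_perm_le_of_mem_doublyStochastic hM f
  refine ⟨σ, fun i hi h0 => hsupp i ?_, ?_⟩
  · rw [hMu i hi, hu]
    simp [h0]
  · calc ∑ j ∈ T, c j * (∑ i, if i ∈ S ∧ σ i = j then 1 else 0)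
        = f (σ.permMatrix ℝ) := by
          refine Finset.sum_congr rfl fun j _ => ?_
          congr 1
          simp only [ite_and, Finset.sum_ite_mem, Finset.univ_inter]
          refine Finset.sum_congr rfl fun i _ => ?_
          simp [Equiv.Perm.permMatrix, PEquiv.toMatrix_apply]
      _ ≤ f M := hσ
      _ ≤ ∑ j ∈ T, c j * x j := by
          refine Finset.sum_le_sum fun j _ => mul_le_mul_of_nonneg_left ?_ (hc j)
          rw [Finset.sum_congr rfl fun i hi => hMu i hi j]
          exact hucol j

/-- Rounding of `x` and `w` for fixed `z`: the rows to be covered are the vertices that `z` does not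
dominate, and for those the `z`-terms of the covering constraint vanish. -/
theorem exists_binary_xw_of_fractional
    {V : Type*} [Fintype V] (G : SimpleGraph V) [DecidableRel G.Adj]
    (MI : Finset V) (x z : V → ℝ) (w : V → V → ℝ)
    (hz : ∀ k, z k = 0 ∨ z k = 1)
    (hx : ∀ i, 0 ≤ x i ∧ x i ≤ 1) (hw : ∀ i j, 0 ≤ w i j ∧ w i j ≤ 1)
    (h14a : ∀ i, 1 ≤ z i + ∑ k ∈ univ.filter (fun k => G.Adj i k), z k + ∑ j, w i j)
    (h14b1 : ∀ j, ∑ i, w i j ≤ x j)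
    (h14b2 : ∀ i j, i ≠ j → ¬ G.Adj i j → w i j = 0)
    (hxMI : ∀ i, i ∉ MI → x i = 0) :
    ∀ cI : V → ℝ, (∀ i, 0 ≤ cI i) →
      ∃ (x' : V → ℝ) (w' : V → V → ℝ),
        (∀ i, x' i = 0 ∨ x' i = 1) ∧ (∀ i j, w' i j = 0 ∨ w' i j = 1) ∧
        (∀ i, 1 ≤ z i + ∑ k ∈ univ.filter (fun k => G.Adj i k), z k + ∑ j, w' i j) ∧
        (∀ j, ∑ i, w' i j ≤ x' j) ∧
        (∀ i j, i ≠ j → ¬ G.Adj i j → w' i j = 0) ∧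
        (∀ i, i ∉ MI → x' i = 0) ∧
        ∑ i ∈ MI, cI i * x' i ≤ ∑ i ∈ MI, cI i * x i := by
  classical
  intro cI hcI
  have hz0 : ∀ k, 0 ≤ z k := fun k => by rcases hz k with h | h <;> simp [h]
  set S : Finset V := univ.filter fun i =>
    z i + ∑ k ∈ univ.filter (fun k => G.Adj i k), z k < 1 with hS
  have hrow : ∀ i ∈ S, 1 ≤ ∑ j, w i j := by
    intro i hi
    have hi' : z i + ∑ k ∈ univ.filter (fun k => G.Adj i k), z k < 1 := by simpa [hS] using hi
    have hnn : 0 ≤ ∑ k ∈ univ.filter (fun k => G.Adj i k), z k :=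
      Finset.sum_nonneg fun k _ => hz0 k
    have hzi : z i = 0 := (hz i).resolve_right (by linarith)
    have hsum : ∑ k ∈ univ.filter (fun k => G.Adj i k), z k = 0 := by
      refine Finset.sum_eq_zero fun k hk => (hz k).resolve_right fun h1 => ?_
      have := Finset.single_le_sum (fun k _ => hz0 k) hk
      linarith
    have := h14a i
    linarith
  obtain ⟨σ, hσ, hcost⟩ := exists_perm_rounding S MI x w (fun j => (hx j).2)
    (fun i j => (hw i j).1) hrow h14b1 cI hcI
  -- As `σ` is injective, each column of `w'` has at most one nonzero entry.
  have hcol : ∀ j, (∑ i, if i ∈ S ∧ σ i = j then (1 : ℝ) else 0) =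
      if σ.symm j ∈ S then 1 else 0 := by
    intro j
    rw [Finset.sum_eq_single (σ.symm j)]
    · simp
    · intro i _ hi
      rw [if_neg]
      rintro ⟨-, rfl⟩
      simp at hi
    · simp
  refine ⟨fun j => ∑ i, if i ∈ S ∧ σ i = j then 1 else 0,
    fun i j => if i ∈ S ∧ σ i = j then 1 else 0, ?_, ?_, ?_, fun j => le_rfl, ?_, ?_, hcost⟩
  · intro j
    dsimp only
    rw [hcol]
    split_ifs <;> simp
  · intro i j
    dsimp only
    split_ifs <;> simp
  · intro i
    by_cases hi : i ∈ S
    · have hnn : 0 ≤ ∑ k ∈ univ.filter (fun k => G.Adj i k), z k :=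
        Finset.sum_nonneg fun k _ => hz0 k
      have hone : (∑ j, if i ∈ S ∧ σ i = j then (1 : ℝ) else 0) = 1 := by simp [hi]
      have := hz0 i
      rw [hone]
      linarith
    · have hi' : 1 ≤ z i + ∑ k ∈ univ.filter (fun k => G.Adj i k), z k := by
        simpa [hS] using hi
      simpa [hi] using hi'
  · intro i j hij hadj
    refine if_neg ?_
    rintro ⟨hi, rfl⟩
    exact hσ i hi (h14b2 i _ hij hadj)
  · intro j hj
    refine Finset.sum_eq_zero fun i _ => if_neg ?_
    rintro ⟨hi, rfl⟩
    have h1 := Finset.single_le_sum (fun k _ => (hw k (σ i)).1) (mem_univ i)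
    have h2 := h14b1 (σ i)
    rw [hxMI _ hj] at h2
    exact hσ i hi (le_antisymm (h1.trans h2) (hw i (σ i)).1)

/-- given binary `z`, fractional `x : V → [0,1]`, `w : V × V → [0,1]`
satisfying (14a), (14b) and `x = 0` off `𝓜^I`, for every choice of nonnegative costs
`c^I` there are binary `x', w'` satisfying the same constraints (with the same `z`)
whose cost does not exceed that of `x`; in particular, the optimal value of the
domination integer program (15) equals that of its mixed relaxation (16). -/
theorem fractional_xw_can_be_rounded
    {V : Type*} [Fintype V] (G : SimpleGraph V) [DecidableRel G.Adj]
    (MI MP : Finset V) (x z : V → ℝ) (w : V → V → ℝ)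
    (hz : ∀ k, z k = 0 ∨ z k = 1)
    (hx : ∀ i, 0 ≤ x i ∧ x i ≤ 1) (hw : ∀ i j, 0 ≤ w i j ∧ w i j ≤ 1)
    (h14a : ∀ i, 1 ≤ z i + ∑ k ∈ univ.filter (fun k => G.Adj i k), z k + ∑ j, w i j)
    (h14b1 : ∀ j, ∑ i, w i j ≤ x j)
    (h14b2 : ∀ i j, i ≠ j → ¬ G.Adj i j → w i j = 0)
    (hxMI : ∀ i, i ∉ MI → x i = 0) :
    (∀ cI : V → ℝ, (∀ i, 0 ≤ cI i) →
      ∃ (x' : V → ℝ) (w' : V → V → ℝ),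
        (∀ i, x' i = 0 ∨ x' i = 1) ∧ (∀ i j, w' i j = 0 ∨ w' i j = 1) ∧
        (∀ i, 1 ≤ z i + ∑ k ∈ univ.filter (fun k => G.Adj i k), z k + ∑ j, w' i j) ∧
        (∀ j, ∑ i, w' i j ≤ x' j) ∧
        (∀ i j, i ≠ j → ¬ G.Adj i j → w' i j = 0) ∧
        (∀ i, i ∉ MI → x' i = 0) ∧
        ∑ i ∈ MI, cI i * x' i ≤ ∑ i ∈ MI, cI i * x i) ∧
    (∀ cI cP : V → ℝ, (∀ i, 0 ≤ cI i) → (∀ k, 0 ≤ cP k) →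
      sInf {v : ℝ | ∃ x z : V → ℝ, ∃ w : V → V → ℝ, Feas15 G MI MP x z w ∧
          v = ∑ i ∈ MI, cI i * x i + ∑ k ∈ MP, cP k * z k} =
      sInf {v : ℝ | ∃ x z : V → ℝ, ∃ w : V → V → ℝ, Feas16 G MI MP x z w ∧
          v = ∑ i ∈ MI, cI i * x i + ∑ k ∈ MP, cP k * z k}) := by
  refine ⟨exists_binary_xw_of_fractional G MI x z w hz hx hw h14a h14b1 h14b2 hxMI, ?_⟩
  intro cI cP hcI hcP
  set A := {v : ℝ | ∃ x z : V → ℝ, ∃ w : V → V → ℝ, Feas15 G MI MP x z w ∧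
    v = ∑ i ∈ MI, cI i * x i + ∑ k ∈ MP, cP k * z k} with hA
  set B := {v : ℝ | ∃ x z : V → ℝ, ∃ w : V → V → ℝ, Feas16 G MI MP x z w ∧
    v = ∑ i ∈ MI, cI i * x i + ∑ k ∈ MP, cP k * z k} with hB
  have hbin : ∀ t : ℝ, t = 0 ∨ t = 1 → 0 ≤ t ∧ t ≤ 1 := by
    rintro t (rfl | rfl) <;> norm_num
  have hAB : A ⊆ B := by
    rintro v ⟨x, z, w, ⟨h1, h2, h3, h4⟩, hv⟩
    exact ⟨x, z, w, ⟨fun i => hbin _ (h1 i), h2, fun i j => hbin _ (h3 i j), h4⟩, hv⟩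
  have hBA : ∀ v ∈ B, ∃ v' ∈ A, v' ≤ v := by
    rintro v ⟨x, z, w, ⟨h1, h2, h3, h4, h5, h6, h7, h8, h9⟩, rfl⟩
    obtain ⟨x', w', g1, g2, g3, g4, g5, g6, g7⟩ :=
      exists_binary_xw_of_fractional G MI x z w h2 h1 h3 h4 h5 h6 h8 cI hcI
    exact ⟨_, ⟨x', z, w', ⟨g1, h2, g2, g3, g4, g5, h7, g6, h9⟩, rfl⟩, by linarith⟩
  have hBbdd : BddBelow B := by
    refine ⟨0, ?_⟩
    rintro v ⟨x, z, w, ⟨h1, h2, -⟩, rfl⟩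
    exact add_nonneg (Finset.sum_nonneg fun i _ => mul_nonneg (hcI i) (h1 i).1)
      (Finset.sum_nonneg fun k _ => mul_nonneg (hcP k) (hbin _ (h2 k)).1)
  rcases B.eq_empty_or_nonempty with hBe | hBne
  · -- If the relaxation is infeasible, so is the integer program, and the two sets coincide.
    have hAe : A = ∅ := Set.subset_empty_iff.1 (hBe ▸ hAB)
    rw [hBe, hAe]
  · obtain ⟨v, hv⟩ := hBne
    obtain ⟨v', hv', -⟩ := hBA v hv
    refine le_antisymm (le_csInf ⟨v, hv⟩ fun b hb => ?_) (csInf_le_csInf hBbdd ⟨v', hv'⟩ hAB)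
    obtain ⟨a, ha, hab⟩ := hBA b hb
    exact (csInf_le (hBbdd.mono hAB) ha).trans hab
end
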